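/- Let G be a group and let A, B ⊆ G. If A is finitely embeddable in B (A ◁ B), then AA⁻¹ ⊆ BB⁻¹. -/

import Mathlib

open scoped Pointwise

/-- `A` is finitely embeddable in `B` (`A ◁ B`): every finite subset of `A` has a right
translate contained in `B`. -/
def FinEmbeddable {G : Type*} [Group G] (A B : Set G) : Prop :=
  ∀ H : Finset G, ↑H ⊆ A → ∃ x : G, ∀ h ∈ H, h * x ∈ B

/-- If `A ◁ B` then `AA⁻¹ ⊆ BB⁻¹`. -/
theorem stmt11 {G : Type*} [Group G] (A B : Set G) (h : FinEmbeddable A B) :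
    A * A⁻¹ ⊆ B * B⁻¹ := by
  classical
  -- For `a, c ∈ A` (here `c = b⁻¹`), a translate of `{a, c}` inside `B` gives `a * c⁻¹ = (a * x) * (c * x)⁻¹`.
  rintro _ ⟨a, ha, b, hb, rfl⟩
  obtain ⟨x, hx⟩ := h {a, b⁻¹} (by
    intro y hy
    simp only [Finset.coe_insert, Finset.coe_singleton, Set.mem_insert_iff,
      Set.mem_singleton_iff] at hy
    rcases hy with rfl | rfl
    · exact ha
    · exact hb)
  refine ⟨a * x, hx a (by simp), (b⁻¹ * x)⁻¹, Set.inv_mem_inv.mpr (hx b⁻¹ (by simp)), ?_⟩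
  group
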